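/- For every even integer k ≥ 2 there exists a sequence (f_v)_{v ∈ ℕ}, where f_v is a k-uniform hypergraph property on v vertices, together with constants c, C > 0 and v₀ ∈ ℕ, such that for all v ≥ v₀: s(f_v) ≤ C·v^{k/2}, s(f_v) ≥ c·v^{k/2}, and bs(f_v) ≥ c·v^k; consequently bs(f_v) ≥ c'·s(f_v)² for some constant c' > 0 and all v ≥ v₀, i.e., there is a k-uniform hypergraph property exhibiting a quadratic gap between sensitivity and block sensitivity. -/

import Mathlib

open Finset

/-- The coordinate set: `k`-element subsets of `Fin v`. -/
abbrev KSet (v k : ℕ) : Type := {S : Finset (Fin v) // S.card = k}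

/-- A `k`-uniform hypergraph on `Fin v`: a Boolean function on `k`-sets. -/
abbrev HGraph (v k : ℕ) : Type := KSet v k → Bool

/-- Sensitivity of `f` at input `x`: the number of coordinates whose flip changes `f`. -/
def localSens {I : Type} [Fintype I] [DecidableEq I]
    (f : (I → Bool) → Bool) (x : I → Bool) : ℕ :=
  (Finset.univ.filter fun i => f (Function.update x i (!x i)) ≠ f x).card

/-- Sensitivity of `f`: maximum of `localSens f x` over all inputs `x`. -/
def sens {I : Type} [Fintype I] [DecidableEq I] (f : (I → Bool) → Bool) : ℕ :=
  Finset.univ.sup (localSens f)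

/-- `sensOn b f` is `s^b(f)`: max sensitivity over inputs with `f x = b`. -/
def sensOn {I : Type} [Fintype I] [DecidableEq I] (b : Bool) (f : (I → Bool) → Bool) : ℕ :=
  (Finset.univ.filter fun x => f x = b).sup (localSens f)

/-- Flip all the coordinates of `x` in the block `B`. -/
def flipBlock {I : Type} [DecidableEq I] (x : I → Bool) (B : Finset I) : I → Bool :=
  fun i => if i ∈ B then !x i else x i

/-- Block sensitivity of `f` at `x`: maximum number of pairwise disjoint sensitive blocks. -/
noncomputable def localBlockSens {I : Type} [Fintype I] [DecidableEq I]
    (f : (I → Bool) → Bool) (x : I → Bool) : ℕ :=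
  sSup {n : ℕ | ∃ B : Fin n → Finset I,
    (∀ j, f (flipBlock x (B j)) ≠ f x) ∧
    ∀ j j', j ≠ j' → Disjoint (B j) (B j')}

/-- Block sensitivity of `f`. -/
noncomputable def blockSens {I : Type} [Fintype I] [DecidableEq I]
    (f : (I → Bool) → Bool) : ℕ :=
  Finset.univ.sup (localBlockSens f)

/-- Image of a `k`-set under a permutation of the vertices. -/
def permKSet {v k : ℕ} (σ : Equiv.Perm (Fin v)) (S : KSet v k) : KSet v k :=
  ⟨S.1.map σ.toEmbedding, by rw [Finset.card_map]; exact S.2⟩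

/-- A `k`-uniform hypergraph property: invariance under all vertex permutations,
where `(σ • G) S = G (σ⁻¹ S)`. -/
def IsHypergraphProperty {v k : ℕ} (f : HGraph v k → Bool) : Prop :=
  ∀ (σ : Equiv.Perm (Fin v)) (G : HGraph v k),
    f (fun S => G (permKSet σ⁻¹ S)) = f G

section IsolatedCliques

variable {v k : ℕ}

/-- `T` is a clique on `k + 1` vertices, and no further edge has at least half of its vertices
in `T`. -/
def IsolatedClique (G : HGraph v k) (T : Finset (Fin v)) : Prop :=
  T.card = k + 1 ∧ ∀ S : KSet v k, k ≤ 2 * (S.1 ∩ T).card → (G S = true ↔ S.1 ⊆ T)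

open Classical in
/-- The property of containing an isolated clique on `k + 1` vertices. -/
noncomputable def hasIsolatedClique (v k : ℕ) (G : HGraph v k) : Bool :=
  decide (∃ T, IsolatedClique G T)

/-- The hypergraph whose edges are the `k`-subsets of `T`. -/
def cliqueOn (T : Finset (Fin v)) : HGraph v k := fun S => decide (S.1 ⊆ T)

lemma hasIsolatedClique_eq_true {G : HGraph v k} :
    hasIsolatedClique v k G = true ↔ ∃ T, IsolatedClique G T := by
  simp [hasIsolatedClique]

lemma hasIsolatedClique_eq_false {G : HGraph v k} :
    hasIsolatedClique v k G = false ↔ ∀ T, ¬ IsolatedClique G T := by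
  simp [hasIsolatedClique]

lemma isolatedClique_cliqueOn {T : Finset (Fin v)} (hT : T.card = k + 1) :
    IsolatedClique (cliqueOn T : HGraph v k) T :=
  ⟨hT, fun S _ => by simp [cliqueOn]⟩

lemma IsolatedClique.perm {G : HGraph v k} {T : Finset (Fin v)} (h : IsolatedClique G T)
    (σ : Equiv.Perm (Fin v)) :
    IsolatedClique (fun S => G (permKSet σ⁻¹ S)) (T.map σ.toEmbedding) := by
  refine ⟨by rw [card_map, h.1], fun S hS => ?_⟩
  have hmap : S.1 = (permKSet σ⁻¹ S).1.map σ.toEmbedding := by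
    ext x
    simp [permKSet, Equiv.Perm.inv_def]
  rw [hmap, ← map_inter, card_map] at hS
  rw [h.2 _ hS, hmap, map_subset_map]

lemma isHypergraphProperty_hasIsolatedClique :
    IsHypergraphProperty (hasIsolatedClique v k) := by
  intro σ G
  rw [Bool.eq_iff_iff, hasIsolatedClique_eq_true, hasIsolatedClique_eq_true]
  refine ⟨fun ⟨T, hT⟩ => ?_, fun ⟨T, hT⟩ => ⟨_, hT.perm σ⟩⟩
  have hcomp : ∀ S : KSet v k, permKSet σ⁻¹ (permKSet σ⁻¹⁻¹ S) = S := by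
    intro S
    ext x
    simp [permKSet, Equiv.Perm.inv_def]
  have := hT.perm σ⁻¹
  simp only [hcomp] at this
  exact ⟨_, this⟩

/-- The `k`-subset `T.erase a` of a `(k + 1)`-set `T`. -/
def eraseKSet (T : Finset (Fin v)) (hT : T.card = k + 1) (a : Fin v) (ha : a ∈ T) : KSet v k :=
  ⟨T.erase a, by rw [card_erase_of_mem ha, hT]; rfl⟩

/-- Of the facets of a simplex `T` opposite to at least two vertices, one differs from `e`. -/
lemma exists_eraseKSet_ne {T U : Finset (Fin v)} (hT : T.card = k + 1) (hU : U ⊆ T)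
    (hcard : 1 < U.card) (e : KSet v k) : ∃ a, ∃ ha : a ∈ U, eraseKSet T hT a (hU ha) ≠ e := by
  obtain ⟨a, ha, b, hb, hab⟩ := one_lt_card.1 hcard
  by_cases h : eraseKSet T hT a (hU ha) = e
  · refine ⟨b, hb, fun h' => hab ?_⟩
    have : T.erase a = T.erase b := congrArg Subtype.val (h.trans h'.symm)
    exact (erase_inj T (hU ha)).1 this
  · exact ⟨a, ha, h⟩

lemma card_filter_subset_le (T : Finset (Fin v)) :
    (univ.filter fun S : KSet v k => S.1 ⊆ T).card ≤ T.card.choose k := by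
  rw [← card_powersetCard]
  refine card_le_card_of_injOn Subtype.val (fun S hS => ?_) Subtype.val_injective.injOn
  simpa [mem_powersetCard, S.2] using hS

lemma isolatedClique_update_iff {G : HGraph v k} {T : Finset (Fin v)} {e S : KSet v k} {b : Bool}
    (h : IsolatedClique (Function.update G e b) T) (hne : S ≠ e)
    (hS : k ≤ 2 * (S.1 ∩ T).card) : G S = true ↔ S.1 ⊆ T := by
  simpa [hne] using h.2 S hS

/-- The coordinate to be flipped to create an isolated clique violates the pattern. -/
lemma not_iff_of_isolatedClique_update {G : HGraph v k} {T : Finset (Fin v)} {e : KSet v k}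
    {b : Bool} (h : IsolatedClique (Function.update G e b) T) (hG : ¬ IsolatedClique G T) :
    k ≤ 2 * (e.1 ∩ T).card ∧ ¬ (G e = true ↔ e.1 ⊆ T) := by
  by_contra hcon
  refine hG ⟨h.1, fun S hS => ?_⟩
  by_cases hne : S = e
  · subst hne
    tauto
  · exact isolatedClique_update_iff h hne hS

/-- Two almost isolated cliques sharing a facet `S`: the second one determines the first. -/
lemma eq_union_of_almost_isolated {G : HGraph v k} (hk : 2 ≤ k) {T T' : Finset (Fin v)}
    {e e' S : KSet v k} {b b' : Bool}
    (h : IsolatedClique (Function.update G e b) T)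
    (h' : IsolatedClique (Function.update G e' b') T')
    (hTT' : T ≠ T') (hS : S.1 ⊆ T) (hS' : S.1 ⊆ T') : T = S.1 ∪ e'.1 := by
  obtain ⟨a, ha, hae⟩ := exists_eraseKSet_ne h.1 hS (by rw [S.2]; omega) e
  have hunion : T = S.1 ∪ T.erase a := by
    refine subset_antisymm (fun x hx => ?_) (union_subset hS (erase_subset _ _))
    by_cases hxa : x = a
    · exact mem_union_left _ (hxa ▸ ha)
    · exact mem_union_right _ (mem_erase.2 ⟨hxa, hx⟩)
  have hreal : G (eraseKSet T h.1 a (hS ha)) = true := by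
    refine (isolatedClique_update_iff h hae ?_).2 (erase_subset _ _)
    have hsub : (eraseKSet T h.1 a (hS ha)).1 ⊆ T := erase_subset _ _
    rw [inter_eq_left.2 hsub, (eraseKSet T h.1 a (hS ha)).2]
    omega
  have heq : eraseKSet T h.1 a (hS ha) = e' := by
    by_contra hne
    have hsub : (eraseKSet T h.1 a (hS ha)).1 ⊆ T' := by
      refine (isolatedClique_update_iff h' hne ?_).1 hreal
      have hle : (S.1.erase a).card ≤ ((eraseKSet T h.1 a (hS ha)).1 ∩ T').card :=
        card_le_card (subset_inter (erase_subset_erase _ hS) ((erase_subset _ _).trans hS'))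
      rw [card_erase_of_mem ha, S.2] at hle
      omega
    refine hTT' (eq_of_subset_of_card_le ?_ (by rw [h.1, h'.1]))
    rw [hunion]
    exact union_subset hS' hsub
  rw [← heq]
  exact hunion

/-- Few coordinates create an isolated clique. -/
lemma localSens_le_of_eq_false {m : ℕ} (hm : 1 ≤ m) (hkm : k = m + m) {G : HGraph v k}
    (hG : hasIsolatedClique v k G = false) :
    localSens (hasIsolatedClique v k) G ≤ 2 * ((k + 2) * v ^ m) := by
  unfold localSens
  rw [hG]
  set s := univ.filter fun i => hasIsolatedClique v k (Function.update G i (!G i)) ≠ false with hs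
  have hex : ∀ e, ∃ T, e ∈ s → IsolatedClique (Function.update G e (!G e)) T := by
    intro e
    by_cases he : e ∈ s
    · obtain ⟨T, hT⟩ := hasIsolatedClique_eq_true.1 (by simpa [hs] using he)
      exact ⟨T, fun _ => hT⟩
    · exact ⟨∅, fun h => absurd h he⟩
  choose T hT using hex
  rw [hasIsolatedClique_eq_false] at hG
  have hinj : ∀ e ∈ s, ∀ e' ∈ s, T e = T e' → e = e' := by
    intro e he e' he' heq
    by_contra hne
    obtain ⟨hlarge, hviol⟩ := not_iff_of_isolatedClique_update (hT e he) (hG _)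
    rw [heq] at hlarge hviol
    exact hviol (isolatedClique_update_iff (hT e' he') hne hlarge)
  have hfacet : ∀ e, ∃ S : KSet v k, e ∈ s → S.1 ⊆ T e ∧ S ≠ e := by
    intro e
    by_cases he : e ∈ s
    · obtain ⟨a, ha, hae⟩ := exists_eraseKSet_ne (hT e he).1 subset_rfl
        (by rw [(hT e he).1]; omega) e
      exact ⟨_, fun _ => ⟨erase_subset _ _, hae⟩⟩
    · exact ⟨e, fun h => absurd h he⟩
  choose S hS using hfacet
  have hhalf : ∀ S : KSet v k, ∃ A ⊆ S.1, A.card = m := fun S =>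
    exists_subset_card_eq (by rw [S.2]; omega)
  choose A hAS hA using hhalf
  have hfiberS : s.card ≤ 2 * (s.image S).card := by
    refine card_le_mul_card_image s 2 fun U _ => ?_
    by_contra! hlt
    obtain ⟨a, b, c, ha, hb, hc, hab, hac, hbc⟩ := two_lt_card_iff.1 hlt
    simp only [mem_filter] at ha hb hc
    obtain ⟨ha, hUa⟩ := ha
    obtain ⟨hb, hUb⟩ := hb
    obtain ⟨hc, hUc⟩ := hc
    have hSa := hUa ▸ (hS a ha).1
    have hSb := hUb ▸ (hS b hb).1
    have hSc := hUc ▸ (hS c hc).1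
    refine hbc (hinj b hb c hc ?_)
    rw [eq_union_of_almost_isolated (by omega) (hT b hb) (hT a ha)
        (fun h => hab (hinj b hb a ha h).symm) hSb hSa,
      eq_union_of_almost_isolated (by omega) (hT c hc) (hT a ha)
        (fun h => hac (hinj c hc a ha h).symm) hSc hSa]
  have hfiberA : (s.image S).card ≤ (k + 2) * ((s.image S).image A).card := by
    refine card_le_mul_card_image _ _ fun B hB => ?_
    obtain ⟨U, hU, rfl⟩ := mem_image.1 hB
    obtain ⟨e₀, he₀, rfl⟩ := mem_image.1 hU
    have hsub : ((s.image S).filter fun U => A U = A (S e₀)) ⊆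
        insert e₀ (univ.filter fun U : KSet v k => U.1 ⊆ T e₀) := by
      intro U hU
      obtain ⟨hU, hAU⟩ := mem_filter.1 hU
      obtain ⟨e, he, rfl⟩ := mem_image.1 hU
      by_cases hne : S e = e₀
      · exact mem_insert.2 (Or.inl hne)
      · refine mem_insert_of_mem (mem_filter.2 ⟨mem_univ _, ?_⟩)
        refine (isolatedClique_update_iff (hT e₀ he₀) hne ?_).1
          ((isolatedClique_update_iff (hT e he) (hS e he).2 ?_).2 (hS e he).1)
        · have := card_le_card
            (subset_inter (hAS (S e)) (hAU ▸ (hAS (S e₀)).trans (hS e₀ he₀).1))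
          rw [hA] at this
          omega
        · rw [inter_eq_left.2 (hS e he).1, (S e).2]
          omega
    have h1 := card_le_card hsub
    have h2 := card_filter_subset_le (k := k) (T e₀)
    rw [(hT e₀ he₀).1, Nat.choose_succ_self_right] at h2
    have h3 := card_insert_le e₀ (univ.filter fun U : KSet v k => U.1 ⊆ T e₀)
    omega
  have himage : ((s.image S).image A).card ≤ v ^ m := by
    have hsub : (s.image S).image A ⊆ powersetCard m (univ : Finset (Fin v)) := by
      intro B hB
      obtain ⟨U, -, rfl⟩ := mem_image.1 hB
      exact mem_powersetCard.2 ⟨subset_univ _, hA U⟩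
    refine (card_le_card hsub).trans ?_
    rw [card_powersetCard, card_univ, Fintype.card_fin]
    exact Nat.choose_le_pow v m
  calc s.card ≤ 2 * (s.image S).card := hfiberS
    _ ≤ 2 * ((k + 2) * v ^ m) := by gcongr; exact hfiberA.trans (by gcongr)

/-- Few coordinates meet an isolated clique in at least half of their vertices. -/
lemma localSens_le_of_eq_true {m : ℕ} (hkm : k = m + m) {G : HGraph v k}
    (hG : hasIsolatedClique v k G = true) :
    localSens (hasIsolatedClique v k) G ≤ 2 ^ (k + 1) * v ^ m := by
  unfold localSens
  rw [hG]
  obtain ⟨T, hT⟩ := hasIsolatedClique_eq_true.1 hG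
  set s := univ.filter fun i => hasIsolatedClique v k (Function.update G i (!G i)) ≠ true with hs
  have hsub : s.image Subtype.val ⊆
      (T.powerset ×ˢ powersetCard m (univ : Finset (Fin v))).image fun p => p.1 ∪ p.2 := by
    intro U hU
    obtain ⟨e, he, rfl⟩ := mem_image.1 hU
    have hlarge : k ≤ 2 * (e.1 ∩ T).card := by
      by_contra hsmall
      refine (mem_filter.1 he).2 (hasIsolatedClique_eq_true.2 ⟨T, hT.1, fun S hS => ?_⟩)
      have hne : S ≠ e := fun h => hsmall (h ▸ hS)
      simpa [hne] using hT.2 S hS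
    obtain ⟨A, hA, hcard⟩ := exists_subset_card_eq (show m ≤ (e.1 ∩ T).card by omega)
    have hAe : A ⊆ e.1 := hA.trans inter_subset_left
    refine mem_image.2 ⟨(A, e.1 \ A), mem_product.2 ⟨?_, ?_⟩, union_sdiff_of_subset hAe⟩
    · exact mem_powerset.2 (hA.trans inter_subset_right)
    · refine mem_powersetCard.2 ⟨subset_univ _, ?_⟩
      rw [card_sdiff_of_subset hAe, e.2, hcard]
      omega
  rw [← card_image_of_injective s Subtype.val_injective]
  refine ((card_le_card hsub).trans card_image_le).trans ?_
  rw [card_product, card_powerset, hT.1, card_powersetCard, card_univ, Fintype.card_fin]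
  gcongr
  exact Nat.choose_le_pow v m

lemma sens_hasIsolatedClique_le {m : ℕ} (hm : 1 ≤ m) (hkm : k = m + m) :
    sens (hasIsolatedClique v k) ≤ (2 ^ (k + 1) + 2 * (k + 2)) * v ^ m := by
  refine Finset.sup_le fun G _ => ?_
  cases hG : hasIsolatedClique v k G
  · have := localSens_le_of_eq_false hm hkm hG
    nlinarith [Nat.zero_le (2 ^ (k + 1) * v ^ m)]
  · have := localSens_le_of_eq_true hkm hG
    nlinarith [Nat.zero_le (2 * (k + 2) * v ^ m)]

/-- Adding one edge to a clique that meets it in half of the vertices destroys the property. -/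
lemma hasIsolatedClique_update_cliqueOn (hk : 2 ≤ k) {T : Finset (Fin v)} (hT : T.card = k + 1)
    {e : KSet v k} (he : k ≤ 2 * (e.1 ∩ T).card) (heT : ¬ e.1 ⊆ T) :
    hasIsolatedClique v k (Function.update (cliqueOn T) e (!(cliqueOn T e))) = false := by
  rw [hasIsolatedClique_eq_false]
  intro T' hT'
  by_cases hne : T' = T
  · subst hne
    have := hT'.2 e he
    simp [cliqueOn, heT] at this
  · have hfacet : ∀ a (ha : a ∈ T'), eraseKSet T' hT'.1 a ha ≠ e → T'.erase a ⊆ T := by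
      intro a ha hae
      have hsub : (eraseKSet T' hT'.1 a ha).1 ⊆ T' := erase_subset _ _
      have := (isolatedClique_update_iff hT' hae (by
        rw [inter_eq_left.2 hsub, (eraseKSet T' hT'.1 a ha).2]; omega)).2 hsub
      exact of_decide_eq_true this
    obtain ⟨a, ha, hae⟩ := exists_eraseKSet_ne hT'.1 subset_rfl (by rw [hT'.1]; omega) e
    obtain ⟨b, hb, hbe⟩ := exists_eraseKSet_ne hT'.1 (erase_subset a T')
      (by rw [card_erase_of_mem ha, hT'.1]; omega) e
    refine hne (eq_of_subset_of_card_le (fun x hx => ?_) (by rw [hT, hT'.1]))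
    by_cases hxa : x = a
    · refine hfacet b _ hbe (mem_erase.2 ⟨?_, hx⟩)
      rw [hxa]
      exact (ne_of_mem_erase hb).symm
    · exact hfacet a ha hae (mem_erase.2 ⟨hxa, hx⟩)

lemma choose_le_sens_hasIsolatedClique {m : ℕ} (hm : 1 ≤ m) (hkm : k = m + m)
    (hv : k + 1 ≤ v) : (v - (k + 1)).choose m ≤ sens (hasIsolatedClique v k) := by
  obtain ⟨T, -, hT⟩ := exists_subset_card_eq (s := (univ : Finset (Fin v))) (n := k + 1)
    (by simpa using hv)
  obtain ⟨A, hAT, hA⟩ := exists_subset_card_eq (show m ≤ T.card by omega)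
  refine le_trans ?_ (Finset.le_sup (f := localSens (hasIsolatedClique v k))
    (mem_univ (cliqueOn T)))
  unfold localSens
  have hcompl : Tᶜ.card = v - (k + 1) := by rw [card_compl, Fintype.card_fin, hT]
  rw [hasIsolatedClique_eq_true.2 ⟨T, isolatedClique_cliqueOn hT⟩, ← hcompl, ← card_powersetCard]
  refine (card_le_card fun B hB => ?_).trans
    (card_image_le (f := fun S : KSet v k => S.1 \ T))
  obtain ⟨hBT, hB⟩ := mem_powersetCard.1 hB
  have hdisj : Disjoint B T := disjoint_left.2 fun x hx => mem_compl.1 (hBT hx)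
  have hAB : (A ∪ B).card = k := by
    rw [card_union_of_disjoint (hdisj.symm.mono_left hAT), hA, hB, hkm]
  refine mem_image.2 ⟨⟨A ∪ B, hAB⟩, mem_filter.2 ⟨mem_univ _, ?_⟩, ?_⟩
  · rw [hasIsolatedClique_update_cliqueOn (by omega) hT]
    · simp
    · have := card_le_card (subset_inter (subset_union_left (s₁ := A) (s₂ := B)) hAT)
      rw [hA] at this
      simp only
      omega
    · intro hsub
      obtain ⟨b, hb⟩ := card_pos.1 (show 0 < B.card by omega)
      exact disjoint_left.1 hdisj hb (hsub (mem_union_right _ hb))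
  · rw [union_sdiff_distrib, sdiff_eq_empty_iff_subset.2 hAT, empty_union,
      sdiff_eq_self_of_disjoint hdisj]

lemma hasIsolatedClique_const_false : hasIsolatedClique v k (fun _ => false) = false := by
  rw [hasIsolatedClique_eq_false]
  intro T hT
  obtain ⟨S, hST, hS⟩ := exists_subset_card_eq (show k ≤ T.card by rw [hT.1]; omega)
  have := (hT.2 ⟨S, hS⟩ (by simp only [inter_eq_left.2 hST, hS]; omega)).2 hST
  simp at this

/-- `(k + 1)`-sets with equal vertex sums modulo `v` share no `k`-subset. -/
lemma eq_of_sum_mod_eq {T T' : Finset (Fin v)} (hT : T.card = k + 1) (hT' : T'.card = k + 1)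
    (hsum : (∑ i ∈ T, (i : ℕ)) % v = (∑ i ∈ T', (i : ℕ)) % v) {S : KSet v k}
    (hS : S.1 ⊆ T) (hS' : S.1 ⊆ T') : T = T' := by
  obtain ⟨a, ha⟩ := card_eq_one.1 (show (T \ S.1).card = 1 by
    rw [card_sdiff_of_subset hS, hT, S.2]; omega)
  obtain ⟨b, hb⟩ := card_eq_one.1 (show (T' \ S.1).card = 1 by
    rw [card_sdiff_of_subset hS', hT', S.2]; omega)
  rw [← sum_sdiff hS, ← sum_sdiff hS', ha, hb, sum_singleton, sum_singleton] at hsum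
  have hmod : (a : ℕ) ≡ b [MOD v] := Nat.ModEq.add_right_cancel' _ hsum
  have hab : a = b := Fin.ext (hmod.eq_of_lt_of_lt a.2 b.2)
  rw [← sdiff_union_of_subset hS, ← sdiff_union_of_subset hS', ha, hb, hab]

end IsolatedCliques

/-- A family of pairwise disjoint sensitive blocks bounds the block sensitivity from below. -/
lemma card_le_blockSens {I ι : Type} [Fintype I] [DecidableEq I] {f : (I → Bool) → Bool}
    {x : I → Bool} (F : Finset ι) (B : ι → Finset I)
    (hB : ∀ j ∈ F, f (flipBlock x (B j)) ≠ f x)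
    (hdisj : ∀ j ∈ F, ∀ j' ∈ F, j ≠ j' → Disjoint (B j) (B j')) :
    F.card ≤ blockSens f := by
  refine le_trans ?_ (Finset.le_sup (f := localBlockSens f) (mem_univ x))
  refine le_csSup ⟨Fintype.card I, ?_⟩ ?_
  · rintro n ⟨C, hC, hCdisj⟩
    have hne : ∀ j, (C j).Nonempty := by
      intro j
      rw [nonempty_iff_ne_empty]
      intro hj
      refine hC j ?_
      rw [hj]
      congr 1
    choose g hg using hne
    have hinj : Function.Injective g := by
      intro j j' hjj'
      by_contra hne
      exact disjoint_left.1 (hCdisj j j' hne) (hg j) (hjj' ▸ hg j')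
    simpa using Fintype.card_le_of_injective g hinj
  · refine ⟨fun j => B (F.equivFin.symm j), fun j => hB _ (F.equivFin.symm j).2, ?_⟩
    intro j j' hjj'
    refine hdisj _ (F.equivFin.symm j).2 _ (F.equivFin.symm j').2 fun h => hjj' ?_
    exact F.equivFin.symm.injective (Subtype.ext h)

lemma choose_le_mul_blockSens (v k : ℕ) :
    v.choose (k + 1) ≤ v * blockSens (hasIsolatedClique v k) := by
  have hmaps : ∀ T ∈ powersetCard (k + 1) (univ : Finset (Fin v)),
      (∑ i ∈ T, (i : ℕ)) % v ∈ range v := by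
    intro T hT
    obtain ⟨i, -⟩ := card_pos.1 (show 0 < T.card by rw [(mem_powersetCard.1 hT).2]; omega)
    exact mem_range.2 (Nat.mod_lt _ (Nat.zero_lt_of_lt i.2))
  have hcount := card_le_mul_card_image_of_maps_to hmaps (blockSens (hasIsolatedClique v k)) ?_
  · rwa [card_powersetCard, card_univ, Fintype.card_fin, card_range, mul_comm] at hcount
  intro r _
  refine card_le_blockSens (x := fun _ => false) _
    (fun T => univ.filter fun S : KSet v k => S.1 ⊆ T) ?_ ?_
  · intro T hT
    have hcard := (mem_powersetCard.1 (mem_filter.1 hT).1).2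
    have hflip : flipBlock (fun _ => false) (univ.filter fun S : KSet v k => S.1 ⊆ T)
        = cliqueOn T := by
      funext S
      simp [flipBlock, cliqueOn]
    rw [hflip, hasIsolatedClique_const_false,
      hasIsolatedClique_eq_true.2 ⟨T, isolatedClique_cliqueOn hcard⟩]
    simp
  · intro T hT T' hT' hne
    obtain ⟨hT, hr⟩ := mem_filter.1 hT
    obtain ⟨hT', hr'⟩ := mem_filter.1 hT'
    refine disjoint_left.2 fun S hS hS' => hne ?_
    exact eq_of_sum_mod_eq (mem_powersetCard.1 hT).2 (mem_powersetCard.1 hT').2 (hr.trans hr'.symm)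
      (mem_filter.1 hS).2 (mem_filter.1 hS').2

lemma pow_le_mul_choose {n r w : ℕ} (h : w ≤ 2 * (n + 1 - r)) :
    w ^ r ≤ 2 ^ r * r.factorial * n.choose r := by
  calc w ^ r ≤ (2 * (n + 1 - r)) ^ r := Nat.pow_le_pow_left h r
    _ = 2 ^ r * (n + 1 - r) ^ r := mul_pow _ _ _
    _ ≤ 2 ^ r * (r.factorial * n.choose r) :=
      Nat.mul_le_mul_left _ (by
        rw [← Nat.descFactorial_eq_factorial_mul_choose]
        exact Nat.pow_sub_le_descFactorial n r)
    _ = 2 ^ r * r.factorial * n.choose r := (mul_assoc _ _ _).symm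

theorem stmt13 (k : ℕ) (hk : 2 ≤ k) (hke : Even k) :
    ∃ f : (v : ℕ) → (HGraph v k → Bool),
      (∀ v, IsHypergraphProperty (f v)) ∧
      ∃ c C : ℝ, 0 < c ∧ 0 < C ∧ ∃ v₀ : ℕ,
        (∀ v : ℕ, v₀ ≤ v →
          (sens (f v) : ℝ) ≤ C * (v : ℝ) ^ (k / 2 : ℕ) ∧
          c * (v : ℝ) ^ (k / 2 : ℕ) ≤ (sens (f v) : ℝ) ∧
          c * (v : ℝ) ^ k ≤ (blockSens (f v) : ℝ)) ∧
        ∃ c' : ℝ, 0 < c' ∧ ∀ v : ℕ, v₀ ≤ v →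
          c' * (sens (f v) : ℝ) ^ 2 ≤ (blockSens (f v) : ℝ) := by
  obtain ⟨m, hkm⟩ := hke
  have hm : 1 ≤ m := by omega
  have hhalf : k / 2 = m := by omega
  rw [hhalf]
  set D : ℕ := 2 ^ (k + 1) * (k + 1).factorial with hD
  set E : ℕ := 2 ^ (k + 1) + 2 * (k + 2) with hE
  have hDpos : (0 : ℝ) < D := by positivity
  have hEpos : (0 : ℝ) < E := by positivity
  have hupper : ∀ v, (sens (hasIsolatedClique v k) : ℝ) ≤ E * (v : ℝ) ^ m := fun v => by
    exact_mod_cast sens_hasIsolatedClique_le hm hkm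
  have hblock : ∀ v, 4 * k ≤ v →
      1 / (D : ℝ) * (v : ℝ) ^ k ≤ (blockSens (hasIsolatedClique v k) : ℝ) := by
    intro v hv
    have hpow : v ^ (k + 1) ≤ D * v.choose (k + 1) := pow_le_mul_choose (by omega)
    have hmul : v * v ^ k ≤ v * (D * blockSens (hasIsolatedClique v k)) := by
      calc v * v ^ k = v ^ (k + 1) := (pow_succ' v k).symm
        _ ≤ D * v.choose (k + 1) := hpow
        _ ≤ D * (v * blockSens (hasIsolatedClique v k)) :=
          Nat.mul_le_mul_left _ (choose_le_mul_blockSens v k)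
        _ = v * (D * blockSens (hasIsolatedClique v k)) := Nat.mul_left_comm _ _ _
    have hle := Nat.le_of_mul_le_mul_left hmul (by omega)
    rw [one_div, inv_mul_le_iff₀ hDpos]
    exact_mod_cast hle
  refine ⟨fun v => hasIsolatedClique v k, fun v => isHypergraphProperty_hasIsolatedClique,
    1 / D, E, by positivity, hEpos, 4 * k, fun v hv => ⟨hupper v, ?_, hblock v hv⟩,
    1 / D / (E : ℝ) ^ 2, by positivity, fun v hv => ?_⟩
  · have hpow : v ^ m ≤ 2 ^ m * m.factorial * (v - (k + 1)).choose m :=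
      pow_le_mul_choose (by omega)
    have hconst : 2 ^ m * m.factorial ≤ D :=
      Nat.mul_le_mul (Nat.pow_le_pow_right (by norm_num) (by omega))
        (Nat.factorial_le (by omega))
    have hle : v ^ m ≤ D * sens (hasIsolatedClique v k) := hpow.trans
      (Nat.mul_le_mul hconst (choose_le_sens_hasIsolatedClique hm hkm (by omega)))
    rw [one_div, inv_mul_le_iff₀ hDpos]
    exact_mod_cast hle
  · refine le_trans ?_ (hblock v hv)
    have hsq : (sens (hasIsolatedClique v k) : ℝ) ^ 2 ≤ (E : ℝ) ^ 2 * (v : ℝ) ^ k := by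
      calc (sens (hasIsolatedClique v k) : ℝ) ^ 2 ≤ (E * (v : ℝ) ^ m) ^ 2 :=
            pow_le_pow_left₀ (Nat.cast_nonneg _) (hupper v) 2
        _ = (E : ℝ) ^ 2 * (v : ℝ) ^ k := by rw [hkm]; ring
    calc 1 / (D : ℝ) / (E : ℝ) ^ 2 * (sens (hasIsolatedClique v k) : ℝ) ^ 2
        ≤ 1 / (D : ℝ) / (E : ℝ) ^ 2 * ((E : ℝ) ^ 2 * (v : ℝ) ^ k) := by gcongr
      _ = 1 / (D : ℝ) * (v : ℝ) ^ k := by field_simp
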